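/- Let A be an abelian category and U ⊆ A a non-empty full subcategory closed under kernels, cokernels, and extensions. Assume that for any epimorphism A ↠ U in A with U ∈ U there exists a morphism V → A with V ∈ U such that the composite V → A → U is an epimorphism. Then for every cochain complex K in A that is bounded above and has all cohomology objects in U, there exists a bounded above complex L with all components in U and a quasi-isomorphism L → K. -/

import Mathlib

open CategoryTheory CategoryTheory.Limits

namespace Stmt2Aux

universe v u

variable {A : Type u} [Category.{v} A] [Abelian A]

/-- Recognizing a quasi-isomorphism of short complexes from explicit cycles and homology. -/
lemma quasiIso_of_data {S T : ShortComplex A} (φ : S ⟶ T)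
    {Z : A} (z : Z ⟶ S.X₂) (wz : z ≫ S.g = 0) (hz : IsLimit (KernelFork.ofι z wz))
    (x : S.X₁ ⟶ Z) (hx : x ≫ z = S.f) (g : Z ⟶ T.cycles)
    (hg : g ≫ T.iCycles = z ≫ φ.τ₂) (w : x ≫ g ≫ T.homologyπ = 0)
    (hc : IsColimit (CokernelCofork.ofπ (g ≫ T.homologyπ) w)) : ShortComplex.QuasiIso φ := by
  have hmono : Mono z := mono_of_isLimit_fork hz
  have hx' : hz.lift (KernelFork.ofι S.f S.zero) = x :=
    (cancel_mono z).1 ((hz.fac _ WalkingParallelPair.zero).trans hx.symm)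
  subst hx'
  let h : S.LeftHomologyData :=
    { K := Z
      H := T.homology
      i := z
      π := g ≫ T.homologyπ
      wi := wz
      hi := hz
      wπ := w
      hπ := hc }
  have key : ShortComplex.homologyMap φ = h.homologyIso.hom := by
    have h1 : S.homologyπ ≫ h.homologyIso.hom = h.cyclesIso.hom ≫ g ≫ T.homologyπ :=
      h.homologyπ_comp_homologyIso_hom
    have h2 : h.cyclesIso.hom ≫ z = S.iCycles := h.cyclesIso_hom_comp_i
    have h3 : ShortComplex.cyclesMap φ = h.cyclesIso.hom ≫ g := by
      refine (cancel_mono T.iCycles).1 ?_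
      rw [ShortComplex.cyclesMap_i, ← h2]
      exact ((Category.assoc _ _ _).trans (congrArg (fun f => h.cyclesIso.hom ≫ f) hg.symm)).trans
        (Category.assoc _ _ _).symm
    refine (cancel_epi S.homologyπ).1 ?_
    refine Eq.trans ?_ h1.symm
    rw [ShortComplex.homologyπ_naturality, h3]
    exact Category.assoc _ _ _
  rw [ShortComplex.quasiIso_iff, key]
  exact Iso.isIso_hom h.homologyIso

/-- Recognizing a quasi-isomorphism from explicit cycles and homology. -/
lemma quasiIsoAt_of_data {ι : Type*} {c : ComplexShape ι} {L K : HomologicalComplex A c}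
    (φ : L ⟶ K) (i j k : ι) (hi : c.prev j = i) (hk : c.next j = k)
    {Z : A} (z : Z ⟶ L.X j) (wz : z ≫ L.d j k = 0) (hz : IsLimit (KernelFork.ofι z wz))
    (x : L.X i ⟶ Z) (hx : x ≫ z = L.d i j) (g : Z ⟶ K.cycles j)
    (hg : g ≫ K.iCycles j = z ≫ φ.f j) (w : x ≫ g ≫ K.homologyπ j = 0)
    (hc : IsColimit (CokernelCofork.ofπ (g ≫ K.homologyπ j) w)) : QuasiIsoAt φ j := by
  subst hi hk
  rw [quasiIsoAt_iff]
  exact quasiIso_of_data (S := L.sc j) (T := K.sc j) _ z wz hz x hx g hg w hc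

/-- The data in one degree. -/
structure State (P : A → Prop) (K : ChainComplex A ℕ) (n : ℕ) where
  X : A
  Z : A
  z : Z ⟶ X
  φ : X ⟶ K.X n
  g : Z ⟶ K.cycles n
  hX : P X
  hZ : P Z
  mono : Mono z
  hg : g ≫ K.iCycles n = z ≫ φ
  epi : Epi (g ≫ K.homologyπ n)

/-- The relation between data in successive degrees. -/
structure Step {P : A → Prop} {K : ChainComplex A ℕ} {n : ℕ} (s : State P K n)
    (t : State P K (n + 1)) where
  x : t.X ⟶ s.Z
  wz : t.z ≫ x = 0
  hz : IsLimit (KernelFork.ofι t.z wz)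
  comm : t.φ ≫ K.d (n + 1) n = x ≫ s.z ≫ s.φ
  w : x ≫ s.g ≫ K.homologyπ n = 0
  hc : IsColimit (CokernelCofork.ofπ (s.g ≫ K.homologyπ n) w)

lemma exists_step (P : A → Prop)
    (hker : ∀ {X Y : A} (f : X ⟶ Y), P X → P Y → P (kernel f))
    (hext : ∀ (S : ShortComplex A), S.ShortExact → P S.X₁ → P S.X₃ → P S.X₂)
    (hlift : ∀ {B U : A} (p : B ⟶ U), Epi p → P U →
      ∃ (V : A) (v : V ⟶ B), P V ∧ Epi (v ≫ p))
    (K : ChainComplex A ℕ) (hH : ∀ n, P (K.homology n)) (n : ℕ) (s : State P K n) :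
    ∃ t : State P K (n + 1), Nonempty (Step s t) := by
  have := s.epi
  let ρ := s.g ≫ K.homologyπ n
  have hB : P (kernel ρ) := hker ρ s.hZ (hH n)
  let T : ShortComplex A := ShortComplex.mk (K.toCycles (n + 1) n) (K.homologyπ n)
    (K.toCycles_comp_homologyπ _ _)
  have hT : T.Exact := ShortComplex.exact_of_g_is_cokernel _ (K.homologyIsCokernel (n + 1) n (by simp))
  obtain ⟨E, p, hp, x₁, hx₁⟩ := hT.exact_up_to_refinements (kernel.ι ρ ≫ s.g)
    ((Category.assoc _ _ _).trans (kernel.condition ρ))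
  dsimp [T] at x₁ hx₁
  obtain ⟨V, v, hV, hv⟩ := hlift p hp hB
  obtain ⟨W, w, hW, hw⟩ := hlift (K.homologyπ (n + 1)) inferInstance (hH (n + 1))
  let q : V ⊞ W ⟶ kernel ρ := biprod.desc (v ≫ p) 0
  have hq : Epi q := by
    have : Epi (biprod.inl ≫ q) := by simpa [q] using hv
    exact epi_of_epi biprod.inl q
  let x : V ⊞ W ⟶ s.Z := q ≫ kernel.ι ρ
  let φ' : V ⊞ W ⟶ K.X (n + 1) := biprod.desc (v ≫ x₁) (w ≫ K.iCycles (n + 1))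
  have hcomm : φ' ≫ K.d (n + 1) n = x ≫ s.z ≫ s.φ := by
    have h1 : p ≫ kernel.ι ρ ≫ s.z ≫ s.φ = x₁ ≫ K.d (n + 1) n := by
      have := hx₁ =≫ K.iCycles n
      simp only [Category.assoc, HomologicalComplex.toCycles_i] at this
      rw [← this, s.hg]
    ext
    · simp [φ', x, q, h1]
    · simp [φ', x, q]
  have hVW : P (V ⊞ W) := hext _
    (ShortComplex.Splitting.ofHasBinaryBiproduct V W).shortExact hV hW
  have hg0 : (kernel.ι x ≫ φ') ≫ K.d (n + 1) n = 0 := by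
    rw [Category.assoc, hcomm, kernel.condition_assoc, zero_comp]
  let t : State P K (n + 1) :=
    { X := V ⊞ W
      Z := kernel x
      z := kernel.ι x
      φ := φ'
      g := K.liftCycles (kernel.ι x ≫ φ') n (by simp) hg0
      hX := hVW
      hZ := hker x hVW s.hZ
      mono := inferInstance
      hg := by simp
      epi := by
        have h0 : biprod.inr ≫ x = 0 := by simp [x, q]
        have h1 : kernel.lift x biprod.inr h0 ≫
            K.liftCycles (kernel.ι x ≫ φ') n (by simp) hg0 = w := by
          rw [← cancel_mono (K.iCycles (n + 1))]
          simp [φ']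
        have : Epi (kernel.lift x biprod.inr h0 ≫
            K.liftCycles (kernel.ι x ≫ φ') n (by simp) hg0 ≫ K.homologyπ (n + 1)) := by
          rw [← Category.assoc, h1]; exact hw
        exact epi_of_epi (kernel.lift x biprod.inr h0) _ }
  refine ⟨t, ⟨⟨x, kernel.condition x, kernelIsKernel x, hcomm, ?_, ?_⟩⟩⟩
  · exact (Category.assoc _ _ _).trans (by rw [kernel.condition ρ, comp_zero])
  · have hρ : Epi ρ := s.epi
    have hex : (ShortComplex.mk (kernel.ι ρ) ρ (kernel.condition ρ)).Exact :=
      ShortComplex.exact_kernel ρ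
    exact isCokernelEpiComp hex.gIsCokernel q rfl

lemma chain_version (P : A → Prop)
    (hker : ∀ {X Y : A} (f : X ⟶ Y), P X → P Y → P (kernel f))
    (hext : ∀ (S : ShortComplex A), S.ShortExact → P S.X₁ → P S.X₃ → P S.X₂)
    (hlift : ∀ {B U : A} (p : B ⟶ U), Epi p → P U →
      ∃ (V : A) (v : V ⟶ B), P V ∧ Epi (v ≫ p))
    (K : ChainComplex A ℕ) (hH : ∀ n, P (K.homology n)) :
    ∃ (L : ChainComplex A ℕ) (φ : L ⟶ K), (∀ n, P (L.X n)) ∧ QuasiIso φ := by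
  obtain ⟨W, w, hW, hw⟩ := hlift (K.homologyπ 0) inferInstance (hH 0)
  let s₀ : State P K 0 :=
    { X := W, Z := W, z := 𝟙 W, φ := w ≫ K.iCycles 0, g := w, hX := hW, hZ := hW,
      mono := inferInstance, hg := by simp, epi := hw }
  choose next hnext using exists_step P hker hext hlift K hH
  let S : ∀ n, State P K n := fun n => Nat.rec s₀ next n
  have step : ∀ n, Step (S n) (S (n + 1)) := fun n => (hnext n (S n)).some
  let X : ℕ → A := fun n => (S n).X
  let d : ∀ n, X (n + 1) ⟶ X n := fun n => (step n).x ≫ (S n).z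
  have hd : ∀ n, d (n + 1) ≫ d n = 0 := fun n => by
    dsimp only [d]
    rw [Category.assoc, reassoc_of% (step n).wz, zero_comp, comp_zero]
  let L : ChainComplex A ℕ := ChainComplex.of X d hd
  have hLd : ∀ n, L.d (n + 1) n = d n := fun n => ChainComplex.of_d _ _ _
  let φ : L ⟶ K :=
    { f := fun n => (S n).φ
      comm' := by
        rintro _ n rfl
        rw [hLd]
        exact (step n).comm.trans (Category.assoc _ _ _).symm }
  refine ⟨L, φ, fun n => (S n).hX, ⟨fun n => ?_⟩⟩
  have hmono := fun n => (S n).mono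
  cases n with
  | zero =>
    have hz0 : L.d 0 0 = 0 := L.shape _ _ (by simp)
    refine quasiIsoAt_of_data φ 1 0 0 (by simp) (by simp) (Z := W) (𝟙 W)
      (by rw [hz0]; exact comp_zero) ?_ (step 0).x (hLd 0).symm w (S 0).hg (step 0).w (step 0).hc
    exact KernelFork.IsLimit.ofId _ hz0
  | succ n =>
    refine quasiIsoAt_of_data φ (n + 2) (n + 1) n (by simp) (by simp) (S (n + 1)).z
      ?_ ?_ (step (n + 1)).x (hLd (n + 1)).symm (S (n + 1)).g (S (n + 1)).hg
      (step (n + 1)).w (step (n + 1)).hc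
    · rw [hLd]
      exact (reassoc_of% (step n).wz) _ |>.trans zero_comp
    · exact isKernelCompMono (step n).hz (S n).z (hLd n)

end Stmt2Aux

/-- Let `A` be abelian and `U ⊆ A` (the predicate `P`) a non-empty full
subcategory closed under kernels, cokernels and extensions (and isomorphisms), with the
lifting property for epimorphisms onto objects of `U`. Then every bounded above cochain
complex `K` in `A` with all cohomology objects in `U` admits a quasi-isomorphism
`L ⟶ K` from a bounded above complex `L` with all components in `U`. -/
theorem stmt_2 {A : Type*} [Category A] [Abelian A] (P : A → Prop)
    (hne : ∃ X, P X)
    (hiso : ∀ {X Y : A}, (X ≅ Y) → P X → P Y)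
    (hker : ∀ {X Y : A} (f : X ⟶ Y), P X → P Y → P (kernel f))
    (hcoker : ∀ {X Y : A} (f : X ⟶ Y), P X → P Y → P (cokernel f))
    (hext : ∀ (S : ShortComplex A), S.ShortExact → P S.X₁ → P S.X₃ → P S.X₂)
    (hlift : ∀ {B U : A} (p : B ⟶ U), Epi p → P U →
      ∃ (V : A) (v : V ⟶ B), P V ∧ Epi (v ≫ p))
    (K : CochainComplex A ℤ) (N : ℤ) (hK : ∀ n, N < n → IsZero (K.X n))
    (hH : ∀ n : ℤ, P (K.homology n)) :
    ∃ (L : CochainComplex A ℤ) (N' : ℤ), (∀ n, P (L.X n)) ∧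
      (∀ n, N' < n → IsZero (L.X n)) ∧ ∃ (φ : L ⟶ K), QuasiIso φ := by
  have hP0 : ∀ Z : A, IsZero Z → P Z := fun Z hZ => by
    obtain ⟨X, hX⟩ := hne
    refine hiso (IsZero.iso ?_ hZ) (hker (𝟙 X) hX hX)
    exact isZero_kernel_of_mono (𝟙 X)
  let e := ComplexShape.embeddingUpIntLE N
  have hlf : e.HasLift (𝟙 (K.restriction e)) := fun j hj => (hj.false_of_isTruncLE).elim
  let ρ : K ⟶ (K.restriction e).extend e := e.liftExtend (𝟙 _) hlf
  have hρ : ∀ n, IsIso (ρ.f n) := fun n => by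
    by_cases hn : ∃ i, e.f i = n
    · obtain ⟨i, hi⟩ := hn
      rw [e.isIso_liftExtend_f_iff _ _ hi]
      infer_instance
    · have hn' : ∀ i, e.f i ≠ n := by simpa using hn
      exact isIso_of_source_target_iso_zero _
        (hK n ((ComplexShape.notMem_range_embeddingUpIntLE_iff N n).1 hn')).isoZero
        (HomologicalComplex.isZero_extend_X _ _ _ hn').isoZero
  have : IsIso ρ := HomologicalComplex.Hom.isIso_of_components ρ
  obtain ⟨L, φ, hL, hφ⟩ := Stmt2Aux.chain_version P hker hext hlift (K.restriction e) (fun n =>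
    hiso ((HomologicalComplex.homologyMapIso (asIso ρ) (e.f n)) ≪≫
      (K.restriction e).extendHomologyIso e rfl) (hH _))
  refine ⟨L.extend e, N, fun n => ?_, fun n hn => ?_, HomologicalComplex.extendMap φ e ≫ inv ρ,
    inferInstance⟩
  · by_cases hn : ∃ i, e.f i = n
    · obtain ⟨i, hi⟩ := hn
      exact hiso (L.extendXIso e hi).symm (hL i)
    · exact hP0 _ (HomologicalComplex.isZero_extend_X _ _ _ (by simpa using hn))
  · exact HomologicalComplex.isZero_extend_X _ _ _
      ((ComplexShape.notMem_range_embeddingUpIntLE_iff N n).2 hn)
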